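/- arXiv:2106.06934 — 3 statements merged into one kernel-verified Lean document; each statement's English description precedes it below -/
import Mathlib

section
/- Let a > 0 and c ≥ 0 be real numbers. Then the function g(P) = (P − c) / ln(1 + a·P) is strictly increasing on the interval (0, ∞). (Consequently, the per-iteration energy consumption ΔE_n(P) of a mobile device, which has this form with c = α·f³ up to positive affine rescaling, increases monotonically in the transmit power P.) -/
/-!
A strictly concave `f` with `0 ≤ f 0` has strictly decreasing chord slopes `f x / x` on the positive
axis, so `x / f x` strictly increases wherever `f` is positive. If `f` is also nondecreasing and
`0 ≤ c`, then `-c / f x` is nondecreasing, and adding it to `x / f x` gives `(x - c) / f x`. The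
function `f x = log (1 + a * x)` is of this kind.
-/

open Set

section AffineMap

variable {𝕜 E F β : Type*} [Ring 𝕜] [PartialOrder 𝕜]
  [AddCommGroup E] [Module 𝕜 E] [AddCommGroup F] [Module 𝕜 F]
  [AddCommMonoid β] [PartialOrder β] [SMul 𝕜 β]

theorem strictConcaveOn_comp_affineMap {f : F → β} {s : Set F} (hf : StrictConcaveOn 𝕜 s f)
    (g : E →ᵃ[𝕜] F) (hg : Function.Injective g) : StrictConcaveOn 𝕜 (g ⁻¹' s) (f ∘ g) := by
  refine ⟨hf.1.affine_preimage g, fun x hx y hy hxy p q hp hq hpq => ?_⟩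
  calc p • f (g x) + q • f (g y) < f (p • g x + q • g y) := hf.2 hx hy (hg.ne hxy) hp hq hpq
    _ = f (g (p • x + q • y)) := by rw [Convex.combo_affine_apply hpq]

end AffineMap

section LinearOrderedField

variable {𝕜 : Type*} [Field 𝕜] [LinearOrder 𝕜] [IsStrictOrderedRing 𝕜] {s : Set 𝕜} {f : 𝕜 → 𝕜}

theorem strictAntiOn_div_id_of_strictConcaveOn (hf : StrictConcaveOn 𝕜 s f) (h0 : 0 ∈ s)
    (hf0 : 0 ≤ f 0) : StrictAntiOn (fun x => f x / x) (s ∩ Ioi 0) := by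
  rintro x ⟨hxs, hx : 0 < x⟩ y ⟨hys, hy : 0 < y⟩ hxy
  have slope_lt : (f y - f 0) / y < (f x - f 0) / x := by
    simpa only [sub_zero] using hf.secant_strict_mono h0 hxs hys hx.ne' hy.ne' hxy
  have intercept_le : f 0 / y ≤ f 0 / x := div_le_div_of_nonneg_left hf0 hx hxy.le
  calc f y / y = (f y - f 0) / y + f 0 / y := by rw [← add_div, sub_add_cancel]
    _ < (f x - f 0) / x + f 0 / x := add_lt_add_of_lt_of_le slope_lt intercept_le
    _ = f x / x := by rw [← add_div, sub_add_cancel]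

theorem strictMonoOn_id_div_of_strictConcaveOn (hf : StrictConcaveOn 𝕜 s f) (h0 : 0 ∈ s)
    (hf0 : 0 ≤ f 0) (hpos : ∀ x ∈ s ∩ Ioi 0, 0 < f x) :
    StrictMonoOn (fun x => x / f x) (s ∩ Ioi 0) := by
  simpa only [Function.comp_def, inv_div] using
    inv_strictAntiOn.comp (strictAntiOn_div_id_of_strictConcaveOn hf h0 hf0)
      fun x hx => div_pos (hpos x hx) hx.2

theorem strictMonoOn_sub_const_div {α : Type*} [Preorder α] {t : Set α} {u v : α → 𝕜} {c : 𝕜}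
    (huv : StrictMonoOn (fun x => u x / v x) t) (hv : MonotoneOn v t) (hpos : ∀ x ∈ t, 0 < v x)
    (hc : 0 ≤ c) : StrictMonoOn (fun x => (u x - c) / v x) t := by
  have const_div_anti : AntitoneOn (fun x => c / v x) t := fun x hx y hy hxy =>
    div_le_div_of_nonneg_left hc (hpos x hx) (hv hx hy hxy)
  simpa only [sub_div, ← sub_eq_add_neg] using huv.add_monotone const_div_anti.neg

end LinearOrderedField

section Log

variable {a : ℝ}

theorem strictConcaveOn_log_one_add_mul (ha : a ≠ 0) :
    StrictConcaveOn ℝ {x | 0 < 1 + a * x} fun x => Real.log (1 + a * x) := by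
  have affine_eq (x : ℝ) : AffineMap.lineMap 1 (1 + a) x = 1 + a * x := by
    rw [AffineMap.lineMap_apply_ring']
    ring
  have affine_injective : Function.Injective (AffineMap.lineMap (k := ℝ) 1 (1 + a)) :=
    AffineMap.lineMap_injective ℝ (by simpa using ha)
  simpa only [Function.comp_def, preimage, mem_Ioi, affine_eq] using
    strictConcaveOn_comp_affineMap strictConcaveOn_log_Ioi _ affine_injective

theorem strictMonoOn_log_one_add_mul (ha : 0 < a) :
    StrictMonoOn (fun x => Real.log (1 + a * x)) {x | 0 < 1 + a * x} :=
  fun _ hx _ _ hxy => Real.log_lt_log hx (by gcongr)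

theorem log_one_add_mul_pos (ha : 0 < a) {x : ℝ} (hx : 0 < x) : 0 < Real.log (1 + a * x) :=
  Real.log_pos (lt_add_of_pos_right 1 (mul_pos ha hx))

end Log

/-- For real `a > 0` and `c ≥ 0`, the function `g(P) = (P - c) / ln(1 + a·P)`
is strictly increasing on `(0, ∞)`. -/
theorem stmt_0 (a c : ℝ) (ha : 0 < a) (hc : 0 ≤ c) :
    StrictMonoOn (fun P : ℝ => (P - c) / Real.log (1 + a * P)) (Set.Ioi (0 : ℝ)) := by
  have log_pos : ∀ P ∈ {P | 0 < 1 + a * P} ∩ Ioi 0, 0 < Real.log (1 + a * P) :=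
    fun P hP => log_one_add_mul_pos ha hP.2
  have id_div_log_mono :
      StrictMonoOn (fun P => P / Real.log (1 + a * P)) ({P | 0 < 1 + a * P} ∩ Ioi 0) :=
    strictMonoOn_id_div_of_strictConcaveOn (strictConcaveOn_log_one_add_mul ha.ne')
      (by simp) (by simp) log_pos
  have log_mono : MonotoneOn (fun P => Real.log (1 + a * P)) ({P | 0 < 1 + a * P} ∩ Ioi 0) :=
    (strictMonoOn_log_one_add_mul ha).monotoneOn.mono inter_subset_left
  have Ioi_subset : Ioi 0 ⊆ {P | 0 < 1 + a * P} ∩ Ioi 0 := fun P (hP : 0 < P) =>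
    ⟨add_pos one_pos (mul_pos ha hP), hP⟩
  exact (strictMonoOn_sub_const_div id_div_log_mono log_mono log_pos hc).mono Ioi_subset
end

section
/- Let W, h, σ², M, τ > 0 be real numbers, and for P > 0 set R(P) = W·log₂(1 + P·h/σ²). For every P > 0 satisfying the delay-feasibility condition M/R(P) ≤ τ, the communication energy satisfies P·M/R(P) ≥ E_th := (τ·σ²/h)·(2^{M/(W·τ)} − 1), with equality if and only if P = (σ²/h)·(2^{M/(W·τ)} − 1). In particular, if a device's available energy budget is below the threshold E_th, it cannot upload its M bits within one iteration of duration τ. -/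
/-!
Parametrise the problem by the upload time `T = M / R(P)` instead of the power `P`. Inverting
Shannon's formula gives `P = (σ² / h) (2 ^ (M / (W T)) - 1)`, so the energy spent is
`(σ² / h) · T (2 ^ (M / (W T)) - 1)`. By Bernoulli's inequality this is strictly decreasing in `T`,
so among the times `T ≤ τ` the energy is least exactly at `T = τ`.
-/

lemma strictAntiOn_mul_rpow_div_sub_one {a b : ℝ} (ha : a ≠ 0) (hb : 0 < b) (hb' : b ≠ 1) :
    StrictAntiOn (fun t : ℝ ↦ t * (b ^ (a / t) - 1)) (Set.Ioi 0) := by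
  intro s (hs : 0 < s) t (ht : 0 < t) hst
  have rpow_ne_one : b ^ (a / s) ≠ 1 := by
    rw [← Real.rpow_zero b, Ne, Real.rpow_right_inj hb hb']
    exact div_ne_zero ha hs.ne'
  have rpow_rescale : b ^ (a / t) = (1 + (b ^ (a / s) - 1)) ^ (s / t) := by
    rw [add_sub_cancel, ← Real.rpow_mul hb.le, div_mul_div_cancel₀ hs.ne']
  have bernoulli : b ^ (a / t) < 1 + s / t * (b ^ (a / s) - 1) := by
    rw [rpow_rescale]
    exact rpow_one_add_lt_one_add_mul_self (by linarith [Real.rpow_pos_of_pos hb (a / s)])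
      (sub_ne_zero.mpr rpow_ne_one) (div_pos hs ht) ((div_lt_one ht).mpr hst)
  calc t * (b ^ (a / t) - 1)
    _ < t * (s / t * (b ^ (a / s) - 1)) := by gcongr; linarith
    _ = s * (b ^ (a / s) - 1) := by field_simp

/-- The Shannon rate `R(P)` of a channel with bandwidth `W`, gain `h` and noise power `σ2`, used at
transmit power `P`. -/
noncomputable def uplinkRate (W h σ2 P : ℝ) : ℝ :=
  W * Real.logb 2 (1 + P * h / σ2)

/-- The transmit power at which uploading `M` bits takes time exactly `T`, obtained by solving
`M / R(P) = T` for `P`. The threshold energy of the iteration is `τ * uploadPower W h σ2 M τ`. -/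
noncomputable def uploadPower (W h σ2 M T : ℝ) : ℝ :=
  σ2 / h * ((2 : ℝ) ^ (M / (W * T)) - 1)

section

variable {W h σ2 M P : ℝ}

lemma uplinkRate_pos (hW : 0 < W) (hsnr : 0 < P * h / σ2) : 0 < uplinkRate W h σ2 P :=
  mul_pos hW (Real.logb_pos one_lt_two (by linarith))

lemma uploadPower_div_uplinkRate (hW : W ≠ 0) (hh : h ≠ 0) (hσ2 : σ2 ≠ 0) (hM : M ≠ 0)
    (hsnr : -1 < P * h / σ2) : uploadPower W h σ2 M (M / uplinkRate W h σ2 P) = P := by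
  have exponent_eq : M / (W * (M / uplinkRate W h σ2 P)) = Real.logb 2 (1 + P * h / σ2) := by
    rw [uplinkRate]
    field_simp
  rw [uploadPower, exponent_eq, Real.rpow_logb two_pos (by norm_num) (by linarith)]
  field_simp
  ring

lemma uploadPower_injective (hW : W ≠ 0) (hh : h ≠ 0) (hσ2 : σ2 ≠ 0) (hM : M ≠ 0) :
    Function.Injective (uploadPower W h σ2 M) := by
  intro S T hST
  have rpow_eq : (2 : ℝ) ^ (M / (W * S)) = 2 ^ (M / (W * T)) :=
    sub_left_injective (mul_left_cancel₀ (div_ne_zero hσ2 hh) hST)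
  have exponent_eq : M / (W * S) = M / (W * T) :=
    (Real.rpow_right_inj two_pos (by norm_num)).mp rpow_eq
  rw [div_eq_mul_inv, div_eq_mul_inv] at exponent_eq
  exact mul_left_cancel₀ hW (inv_injective (mul_left_cancel₀ hM exponent_eq))

lemma strictAntiOn_mul_uploadPower (hW : W ≠ 0) (hh : 0 < h) (hσ2 : 0 < σ2) (hM : M ≠ 0) :
    StrictAntiOn (fun T ↦ T * uploadPower W h σ2 M T) (Set.Ioi 0) := by
  have energy_eq (T : ℝ) :
      T * uploadPower W h σ2 M T = σ2 / h * (T * ((2 : ℝ) ^ (M / W / T) - 1)) := by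
    rw [uploadPower, div_div]
    ring
  simp only [energy_eq]
  exact (strictMono_mul_left_of_pos (div_pos hσ2 hh)).comp_strictAntiOn
    (strictAntiOn_mul_rpow_div_sub_one (div_ne_zero hM hW) two_pos (by norm_num))

end

/-- For `W, h, σ², M, τ > 0`, rate `R(P) = W·log₂(1 + P·h/σ²)`, and any `P > 0`
satisfying the delay-feasibility condition `M/R(P) ≤ τ`, the communication energy
`P·M/R(P)` is at least the threshold energy `E_th = (τ·σ²/h)·(2^(M/(W·τ)) − 1)`,
with equality iff `P = (σ²/h)·(2^(M/(W·τ)) − 1)`. -/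
theorem stmt_3 (W h σ2 M τ : ℝ) (hW : 0 < W) (hh : 0 < h) (hσ2 : 0 < σ2)
    (hM : 0 < M) (hτ : 0 < τ) (P : ℝ) (hP : 0 < P)
    (hfeas : M / (W * Real.logb 2 (1 + P * h / σ2)) ≤ τ) :
    (τ * σ2 / h) * ((2 : ℝ) ^ (M / (W * τ)) - 1) ≤
        P * M / (W * Real.logb 2 (1 + P * h / σ2)) ∧
      (P * M / (W * Real.logb 2 (1 + P * h / σ2)) =
          (τ * σ2 / h) * ((2 : ℝ) ^ (M / (W * τ)) - 1) ↔
        P = (σ2 / h) * ((2 : ℝ) ^ (M / (W * τ)) - 1)) := by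
  have snr_pos : 0 < P * h / σ2 := by positivity
  have energy_anti := strictAntiOn_mul_uploadPower hW.ne' hh hσ2 hM.ne'
  have power_eq : uploadPower W h σ2 M (M / uplinkRate W h σ2 P) = P :=
    uploadPower_div_uplinkRate hW.ne' hh.ne' hσ2.ne' hM.ne' (by linarith)
  have time_pos : 0 < M / uplinkRate W h σ2 P := div_pos hM (uplinkRate_pos hW snr_pos)
  have threshold_eq :
      τ * σ2 / h * ((2 : ℝ) ^ (M / (W * τ)) - 1) = τ * uploadPower W h σ2 M τ := by
    rw [uploadPower]
    ring
  rw [← uplinkRate] at hfeas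
  rw [threshold_eq, ← uploadPower, ← uplinkRate, mul_div_assoc, mul_comm P]
  generalize M / uplinkRate W h σ2 P = T at *
  subst power_eq
  exact ⟨energy_anti.antitoneOn time_pos hτ hfeas,
    (energy_anti.injOn.eq_iff time_pos hτ).trans
      (uploadPower_injective hW.ne' hh.ne' hσ2.ne' hM.ne').eq_iff.symm⟩
end

section
/- Let W, h, σ², M, τ, α, f > 0 be real numbers, set P_min = (σ²/h)·(2^{M/(W·τ)} − 1), let P_max ≥ P_min, and for P > 0 define R(P) = W·log₂(1 + P·h/σ²) and ΔE(P) = (τ − M/R(P))·α·f³ + P·M/R(P). Let E_th = τ·P_min = (τσ²/h)(2^{M/(Wτ)} − 1) and ΔE_max = ΔE(P_max). Then ΔE(P_min) = E_th, and for every target energy value y with E_th ≤ y ≤ ΔE_max there exists a unique P ∈ [P_min, P_max] such that ΔE(P) = y. -/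
/-!
The rate `R` is strictly concave and increasing with `R 0 = 0`. Monotonicity of `R` makes the
computation energy `(τ - M / R P) * c` nondecreasing in `P`. Concavity makes the secant slope
`R P / P` through the origin strictly decreasing, so the transmission energy `M * (P / R P)` is
strictly increasing. Hence `ΔE` is continuous and strictly increasing, and the intermediate value
theorem inverts it. At `P_min` the transmission takes exactly the time `τ`, which leaves no
computation energy and gives `ΔE P_min = τ * P_min`.
-/

open Set Real

theorem mul_lt_mul_of_strictConcaveOn {𝕜 : Type*} [Field 𝕜] [LinearOrder 𝕜] [IsStrictOrderedRing 𝕜]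
    {s : Set 𝕜} {f : 𝕜 → 𝕜} (hf : StrictConcaveOn 𝕜 s f) (h0 : 0 ∈ s) (hf0 : 0 ≤ f 0)
    {x y : 𝕜} (hx : 0 < x) (hxy : x < y) (hy : y ∈ s) : x * f y < y * f x := by
  have hy0 : 0 < y := hx.trans hxy
  have hweight : 0 < 1 - x / y := sub_pos.2 ((div_lt_one hy0).2 hxy)
  have hsecant : (1 - x / y) * f 0 + x / y * f y < f x := by
    simpa [div_mul_cancel₀ x hy0.ne'] using
      hf.2 h0 hy hy0.ne hweight (div_pos hx hy0) (sub_add_cancel _ _)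
  calc x * f y = y * (x / y * f y) := by field_simp
    _ ≤ y * ((1 - x / y) * f 0 + x / y * f y) := by
      gcongr
      exact le_add_of_nonneg_left (mul_nonneg hweight.le hf0)
    _ < y * f x := by gcongr

theorem existsUnique_mem_Icc_eq_of_injOn {X Y : Type*}
    [ConditionallyCompleteLinearOrder X] [TopologicalSpace X] [OrderTopology X] [DenselyOrdered X]
    [LinearOrder Y] [TopologicalSpace Y] [OrderClosedTopology Y] {f : X → Y} {a b : X} {y : Y}
    (hab : a ≤ b) (hinj : InjOn f (Icc a b)) (hcont : ContinuousOn f (Icc a b))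
    (hy : y ∈ Icc (f a) (f b)) : ∃! x, x ∈ Icc a b ∧ f x = y := by
  obtain ⟨x, hx, hxy⟩ := intermediate_value_Icc hab hcont hy
  exact ⟨x, ⟨hx, hxy⟩, fun z hz => hinj hz.1 hx (hz.2.trans hxy.symm)⟩

/-- The energy `ΔE(P)` of an iteration of duration `τ` in which `M` bits are sent at power `P` and
rate `R P`, and the remaining time `τ - M / R P` is spent computing at power `c` (`α * f ^ 3` in
the paper). The rate is kept arbitrary. -/
noncomputable def iterationEnergy (R : ℝ → ℝ) (M τ c P : ℝ) : ℝ :=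
  (τ - M / R P) * c + P * M / R P

section IterationEnergy

variable {R : ℝ → ℝ} {M τ c : ℝ}

theorem iterationEnergy_of_div_rate_eq {P : ℝ} (hP : M / R P = τ) :
    iterationEnergy R M τ c P = τ * P := by
  rw [iterationEnergy, mul_div_assoc, hP]
  ring

theorem strictMonoOn_iterationEnergy (hR : StrictConcaveOn ℝ (Ici 0) R) (hR0 : 0 ≤ R 0)
    (hmono : MonotoneOn R (Ioi 0)) (hpos : ∀ P, 0 < P → 0 < R P) (hM : 0 < M) (hc : 0 ≤ c) :
    StrictMonoOn (iterationEnergy R M τ c) (Ioi 0) := by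
  intro P hP Q hQ hPQ
  have hRP : 0 < R P := hpos P hP
  have hRQ : 0 < R Q := hpos Q hQ
  have hrate : R P ≤ R Q := hmono hP hQ hPQ.le
  have hcomputation : (τ - M / R P) * c ≤ (τ - M / R Q) * c := by gcongr
  have hslope : P / R P < Q / R Q :=
    (div_lt_div_iff₀ hRP hRQ).2
      (mul_lt_mul_of_strictConcaveOn hR self_mem_Ici hR0 hP hPQ (mem_Ici_of_Ioi hQ))
  have htransmission : P * M / R P < Q * M / R Q := by
    simpa only [mul_div_right_comm] using mul_lt_mul_of_pos_right hslope hM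
  exact add_lt_add_of_le_of_lt hcomputation htransmission

theorem continuousOn_iterationEnergy {s : Set ℝ} (hR : ContinuousOn R s)
    (hne : ∀ P ∈ s, R P ≠ 0) : ContinuousOn (iterationEnergy R M τ c) s := by
  unfold iterationEnergy
  fun_prop (disch := assumption)

end IterationEnergy

/-- The Shannon rate `R(P)` of a channel with bandwidth `W`, gain `h` and noise power `σ2` at
transmit power `P`. -/
noncomputable def shannonRate (W h σ2 P : ℝ) : ℝ :=
  W * logb 2 (1 + P * h / σ2)

section ShannonRate

variable {W h σ2 : ℝ}

theorem shannonRate_zero (W h σ2 : ℝ) : shannonRate W h σ2 0 = 0 := by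
  simp [shannonRate]

theorem one_add_snr_pos (hh : 0 < h) (hσ2 : 0 < σ2) {P : ℝ} (hP : 0 ≤ P) :
    0 < 1 + P * h / σ2 := by
  positivity

theorem strictMonoOn_shannonRate (hW : 0 < W) (hh : 0 < h) (hσ2 : 0 < σ2) :
    StrictMonoOn (shannonRate W h σ2) (Ici 0) := by
  intro P hP Q _ hPQ
  have hsnr : 1 + P * h / σ2 < 1 + Q * h / σ2 := by gcongr
  exact mul_lt_mul_of_pos_left (logb_lt_logb one_lt_two (one_add_snr_pos hh hσ2 hP) hsnr) hW

theorem shannonRate_pos (hW : 0 < W) (hh : 0 < h) (hσ2 : 0 < σ2) {P : ℝ} (hP : 0 < P) :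
    0 < shannonRate W h σ2 P := by
  simpa only [shannonRate_zero] using
    strictMonoOn_shannonRate hW hh hσ2 self_mem_Ici (mem_Ici.2 hP.le) hP

theorem strictConcaveOn_shannonRate (hW : 0 < W) (hh : 0 < h) (hσ2 : 0 < σ2) :
    StrictConcaveOn ℝ (Ici 0) (shannonRate W h σ2) := by
  refine ⟨convex_Ici 0, fun P hP Q hQ hPQ a b ha hb hab => ?_⟩
  have hsnr_ne : 1 + P * h / σ2 ≠ 1 + Q * h / σ2 := by
    simpa [hσ2.ne', hh.ne', div_left_inj'] using hPQ
  have hsnr_combo : a * (1 + P * h / σ2) + b * (1 + Q * h / σ2) = 1 + (a * P + b * Q) * h / σ2 := by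
    linear_combination hab
  have hlog : a * log (1 + P * h / σ2) + b * log (1 + Q * h / σ2)
      < log (1 + (a * P + b * Q) * h / σ2) := by
    simpa only [smul_eq_mul, hsnr_combo] using strictConcaveOn_log_Ioi.2
      (one_add_snr_pos hh hσ2 hP) (one_add_snr_pos hh hσ2 hQ) hsnr_ne ha hb hab
  calc a * shannonRate W h σ2 P + b * shannonRate W h σ2 Q
      = W / log 2 * (a * log (1 + P * h / σ2) + b * log (1 + Q * h / σ2)) := by
        simp only [shannonRate, logb]
        ring
    _ < W / log 2 * log (1 + (a * P + b * Q) * h / σ2) :=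
        mul_lt_mul_of_pos_left hlog (div_pos hW (log_pos one_lt_two))
    _ = shannonRate W h σ2 (a * P + b * Q) := by
        simp only [shannonRate, logb]
        ring

theorem continuousOn_shannonRate (W : ℝ) (hh : 0 < h) (hσ2 : 0 < σ2) :
    ContinuousOn (shannonRate W h σ2) (Ici 0) :=
  continuousOn_const.mul <|
    ContinuousOn.logb (by fun_prop) fun _ hP => (one_add_snr_pos hh hσ2 hP).ne'

end ShannonRate

/-- The power `P_min` at which sending `M` bits at the Shannon rate takes exactly the time `τ`. -/
noncomputable def minPower (W h σ2 M τ : ℝ) : ℝ :=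
  σ2 / h * (2 ^ (M / (W * τ)) - 1)

section MinPower

variable {W h σ2 M τ : ℝ}

theorem minPower_pos (hW : 0 < W) (hh : 0 < h) (hσ2 : 0 < σ2) (hM : 0 < M) (hτ : 0 < τ) :
    0 < minPower W h σ2 M τ := by
  have hpow : (1 : ℝ) < 2 ^ (M / (W * τ)) := one_lt_rpow one_lt_two (by positivity)
  exact mul_pos (div_pos hσ2 hh) (sub_pos.2 hpow)

theorem shannonRate_minPower (hW : W ≠ 0) (hh : h ≠ 0) (hσ2 : σ2 ≠ 0) :
    shannonRate W h σ2 (minPower W h σ2 M τ) = M / τ := by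
  have hsnr : 1 + minPower W h σ2 M τ * h / σ2 = 2 ^ (M / (W * τ)) := by
    rw [minPower]
    field_simp
    ring
  rw [shannonRate, hsnr, logb_rpow two_pos (by norm_num)]
  field_simp

end MinPower

/-- For `W, h, σ², M, τ, α, f > 0`, with `P_min = (σ²/h)·(2^(M/(W·τ)) − 1)`,
`P_max ≥ P_min`, rate `R(P) = W·log₂(1 + P·h/σ²)` and energy
`ΔE(P) = (τ − M/R(P))·α·f³ + P·M/R(P)`, we have `ΔE(P_min) = E_th = τ·P_min`,
and for every target `y` with `E_th ≤ y ≤ ΔE(P_max)` there is a unique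
`P ∈ [P_min, P_max]` with `ΔE(P) = y`. -/
theorem stmt_6 (W h σ2 M τ α f : ℝ) (hW : 0 < W) (hh : 0 < h) (hσ2 : 0 < σ2)
    (hM : 0 < M) (hτ : 0 < τ) (hα : 0 < α) (hf : 0 < f)
    (Pmin : ℝ) (hPmin : Pmin = (σ2 / h) * ((2 : ℝ) ^ (M / (W * τ)) - 1))
    (Pmax : ℝ) (hPmax : Pmin ≤ Pmax)
    (ΔE : ℝ → ℝ)
    (hΔE : ∀ P : ℝ, ΔE P = (τ - M / (W * Real.logb 2 (1 + P * h / σ2))) * (α * f ^ 3) +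
      P * M / (W * Real.logb 2 (1 + P * h / σ2)))
    (Eth : ℝ) (hEth : Eth = τ * Pmin) :
    ΔE Pmin = Eth ∧
      ∀ y : ℝ, Eth ≤ y → y ≤ ΔE Pmax →
        ∃! P : ℝ, P ∈ Set.Icc Pmin Pmax ∧ ΔE P = y := by
  obtain rfl : ΔE = iterationEnergy (shannonRate W h σ2) M τ (α * f ^ 3) := funext hΔE
  obtain rfl : Pmin = minPower W h σ2 M τ := hPmin
  set E := iterationEnergy (shannonRate W h σ2) M τ (α * f ^ 3)
  have hEmin : E (minPower W h σ2 M τ) = Eth := by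
    rw [hEth]
    apply iterationEnergy_of_div_rate_eq
    rw [shannonRate_minPower hW.ne' hh.ne' hσ2.ne', div_div_cancel₀ hM.ne']
  have hmono : StrictMonoOn E (Ioi 0) :=
    strictMonoOn_iterationEnergy (strictConcaveOn_shannonRate hW hh hσ2)
      (shannonRate_zero W h σ2).ge
      ((strictMonoOn_shannonRate hW hh hσ2).monotoneOn.mono Ioi_subset_Ici_self)
      (fun _ => shannonRate_pos hW hh hσ2) hM (by positivity)
  have hcont : ContinuousOn E (Ioi 0) :=
    continuousOn_iterationEnergy ((continuousOn_shannonRate W hh hσ2).mono Ioi_subset_Ici_self)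
      fun _ hP => (shannonRate_pos hW hh hσ2 hP).ne'
  have hIcc : Icc (minPower W h σ2 M τ) Pmax ⊆ Ioi 0 :=
    fun _ hP => (minPower_pos hW hh hσ2 hM hτ).trans_le hP.1
  exact ⟨hEmin, fun y hy_min hy_max => existsUnique_mem_Icc_eq_of_injOn hPmax
    (hmono.injOn.mono hIcc) (hcont.mono hIcc) ⟨hEmin.trans_le hy_min, hy_max⟩⟩
end
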